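/- arXiv:2405.07443 — 2 statements merged into one kernel-verified Lean document; each statement's English description precedes it below -/
import Mathlib

section
/- Let q, r, c > 0 be real numbers, let P be a symmetric positive definite n×n real matrix with q·I ⪯ P, let S be a symmetric positive definite p×p real matrix with r·I ⪯ S, and let C be a p×n real matrix with C Cᵀ ⪯ c·I. Then the updated covariance Ξᵤ = P − P Cᵀ (C P Cᵀ + S)⁻¹ C P satisfies Ξᵤ ⪰ ε·I, where ε = (1/q + c/r)⁻¹. -/
open Matrix

/-!
The updated covariance `Ξᵤ` is the Schur complement of `C P Cᴴ + S` in the joint covariance matrix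
of state and measurement, so `E ≤ Ξᵤ` says that this joint matrix dominates `diag(E, 0)`. The joint
matrix is linear and positive in `(P, S)`, hence `Ξᵤ` is monotone in both, which reduces the bound
to `P = q I` and `S = r I`. There, taking the other Schur complement of the block inequality
`diag(ε I, 0) ≤ joint matrix` turns it into `0 ≤ (r / c) (c I - C Cᴴ)`.
-/

section UpdatedCovariance

variable {m n R 𝕜 : Type*}

lemma fromBlocks_sub_fromBlocks {l o : Type*} [Sub R] (A₁ A₂ : Matrix n l R)
    (B₁ B₂ : Matrix n m R) (C₁ C₂ : Matrix o l R) (D₁ D₂ : Matrix o m R) :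
    fromBlocks A₁ B₁ C₁ D₁ - fromBlocks A₂ B₂ C₂ D₂ =
      fromBlocks (A₁ - A₂) (B₁ - B₂) (C₁ - C₂) (D₁ - D₂) := by
  ext (_ | _) (_ | _) <;> rfl

variable [Fintype n]

/-- The joint covariance of a state `x` with covariance `P` and of its measurement `C x + v`, where
the noise `v` is uncorrelated with `x` and has covariance `S`. -/
def jointCovariance [NonUnitalNonAssocSemiring R] [Star R] (P : Matrix n n R) (C : Matrix m n R)
    (S : Matrix m m R) : Matrix (n ⊕ m) (n ⊕ m) R :=
  fromBlocks P (P * Cᴴ) (C * P) (C * P * Cᴴ + S)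

lemma jointCovariance_sub [NonUnitalNonAssocRing R] [Star R] (P₁ P₂ : Matrix n n R)
    (C : Matrix m n R) (S₁ S₂ : Matrix m m R) :
    jointCovariance P₁ C S₁ - jointCovariance P₂ C S₂ =
      jointCovariance (P₁ - P₂) C (S₁ - S₂) := by
  simp only [jointCovariance, fromBlocks_sub_fromBlocks, Matrix.mul_sub, Matrix.sub_mul,
    add_sub_add_comm]

/-- The covariance `Ξᵤ` of the filtering error after the measurement update of a Kalman filter with
prediction covariance `P`, measurement matrix `C` and measurement noise covariance `S`. It has this
meaning only when `C P Cᴴ + S` is invertible, as the matrix inverse is otherwise `0`. -/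
noncomputable def updatedCovariance [CommRing R] [Star R] [Fintype m] [DecidableEq m]
    (P : Matrix n n R) (C : Matrix m n R) (S : Matrix m m R) : Matrix n n R :=
  P - P * Cᴴ * (C * P * Cᴴ + S)⁻¹ * C * P

open scoped ComplexOrder MatrixOrder

variable [RCLike 𝕜]

lemma posDef_of_posDef_of_le {A B : Matrix m m 𝕜} (hA : A.PosDef) (hAB : A ≤ B) :
    B.PosDef := by
  simpa using hA.add_posSemidef (le_iff.mp hAB)

lemma posDef_real_smul_one [DecidableEq m] {a : ℝ} (ha : 0 < a) :
    (a • (1 : Matrix m m 𝕜)).PosDef :=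
  PosDef.one.smul ha

lemma jointCovariance_nonneg [Finite m] {P : Matrix n n 𝕜} (C : Matrix m n 𝕜)
    {S : Matrix m m 𝕜} (hP : 0 ≤ P) (hS : 0 ≤ S) : 0 ≤ jointCovariance P C S := by
  classical
  have := Fintype.ofFinite m
  have hdecomp : jointCovariance P C S =
      fromRows (1 : Matrix n n 𝕜) C * P * (fromRows (1 : Matrix n n 𝕜) C)ᴴ +
        fromRows (0 : Matrix n m 𝕜) 1 * S * (fromRows (0 : Matrix n m 𝕜) 1)ᴴ := by
    ext (_ | _) (_ | _) <;>
      simp [jointCovariance, conjTranspose_fromRows_eq_fromCols_conjTranspose, fromRows_mul]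
  rw [hdecomp]
  exact add_nonneg (hP.posSemidef.mul_mul_conjTranspose_same _).nonneg
    (hS.posSemidef.mul_mul_conjTranspose_same _).nonneg

lemma jointCovariance_mono [Finite m] {P₁ P₂ : Matrix n n 𝕜} (C : Matrix m n 𝕜)
    {S₁ S₂ : Matrix m m 𝕜} (hP : P₁ ≤ P₂) (hS : S₁ ≤ S₂) :
    jointCovariance P₁ C S₁ ≤ jointCovariance P₂ C S₂ := by
  rw [← sub_nonneg, jointCovariance_sub]
  exact jointCovariance_nonneg C (sub_nonneg.mpr hP) (sub_nonneg.mpr hS)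

variable [Fintype m] [DecidableEq m]

lemma le_updatedCovariance_iff {P E : Matrix n n 𝕜} {C : Matrix m n 𝕜} {S : Matrix m m 𝕜}
    (hP : 0 ≤ P) (hS : S.PosDef) :
    E ≤ updatedCovariance P C S ↔ fromBlocks E 0 0 0 ≤ jointCovariance P C S := by
  have hM : (C * P * Cᴴ + S).PosDef :=
    PosDef.posSemidef_add (hP.posSemidef.mul_mul_conjTranspose_same C) hS
  have hCP : C * P = (P * Cᴴ)ᴴ := by
    rw [conjTranspose_mul, conjTranspose_conjTranspose, hP.posSemidef.isHermitian.eq]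
  let := hM.isUnit.invertible
  have hschur := PosDef.fromBlocks₂₂ (P - E) (P * Cᴴ) hM
  rw [← hCP, ← Matrix.mul_assoc] at hschur
  rw [le_iff, le_iff, jointCovariance, fromBlocks_sub_fromBlocks, sub_zero, sub_zero, sub_zero,
    hschur, updatedCovariance, sub_right_comm]

lemma updatedCovariance_mono {P₁ P₂ : Matrix n n 𝕜} (C : Matrix m n 𝕜)
    {S₁ S₂ : Matrix m m 𝕜} (hP₁ : 0 ≤ P₁) (hS₁ : S₁.PosDef) (hP : P₁ ≤ P₂) (hS : S₁ ≤ S₂) :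
    updatedCovariance P₁ C S₁ ≤ updatedCovariance P₂ C S₂ := by
  rw [le_updatedCovariance_iff (hP₁.trans hP) (posDef_of_posDef_of_le hS₁ hS)]
  exact ((le_updatedCovariance_iff hP₁ hS₁).mp le_rfl).trans (jointCovariance_mono C hP hS)

lemma smul_one_le_updatedCovariance_smul_one [DecidableEq n] {q r c : ℝ} (hq : 0 < q)
    (hr : 0 < r) (hc : 0 < c) {C : Matrix m n 𝕜} (hC : C * Cᴴ ≤ c • 1) :
    (1 / q + c / r)⁻¹ • 1 ≤ updatedCovariance (q • 1) C (r • 1) := by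
  set ε := (1 / q + c / r)⁻¹ with hε
  have hgap : q - ε = q ^ 2 * c / (r + q * c) := by
    rw [hε]; field_simp; ring
  have hgap_pos : 0 < q - ε := by rw [hgap]; positivity
  have hA : ((q - ε) • (1 : Matrix n n 𝕜)).PosDef := posDef_real_smul_one hgap_pos
  let := hA.isUnit.invertible
  have hinv : ((q - ε) • (1 : Matrix n n 𝕜))⁻¹ = (q - ε)⁻¹ • 1 :=
    inv_eq_right_inv (by simp [smul_smul, hgap_pos.ne'])
  have hschur :
      q • (C * Cᴴ) + r • 1 - (q • Cᴴ)ᴴ * ((q - ε) • (1 : Matrix n n 𝕜))⁻¹ * (q • Cᴴ) =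
        (r / c) • (c • 1 - C * Cᴴ) := by
    rw [hinv, hgap]
    simp only [conjTranspose_smul, conjTranspose_conjTranspose, Matrix.smul_mul,
      Matrix.mul_smul, Matrix.mul_one, star_trivial]
    match_scalars <;> field_simp
    ring
  have hblocks : jointCovariance (q • 1) C (r • 1) - fromBlocks (ε • 1) 0 0 0 =
      fromBlocks ((q - ε) • 1) (q • Cᴴ) (q • Cᴴ)ᴴ (q • (C * Cᴴ) + r • 1) := by
    simp [jointCovariance, fromBlocks_sub_fromBlocks, sub_smul]
  rw [le_updatedCovariance_iff (posDef_real_smul_one hq).posSemidef.nonneg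
    (posDef_real_smul_one hr), le_iff, hblocks, PosDef.fromBlocks₁₁ _ _ hA, hschur]
  exact (le_iff.mp hC).smul (by positivity)

theorem filtering_error_covariance_lower_bound_general [DecidableEq n] {q r c : ℝ} (hq : 0 < q)
    (hr : 0 < r) (hc : 0 < c) {P : Matrix n n 𝕜} {S : Matrix m m 𝕜} {C : Matrix m n 𝕜}
    (hqP : q • 1 ≤ P) (hrS : r • 1 ≤ S) (hC : C * Cᴴ ≤ c • 1) :
    (1 / q + c / r)⁻¹ • 1 ≤ updatedCovariance P C S :=
  calc (1 / q + c / r)⁻¹ • 1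
    _ ≤ updatedCovariance (q • 1) C (r • 1) := smul_one_le_updatedCovariance_smul_one hq hr hc hC
    _ ≤ updatedCovariance P C S :=
      updatedCovariance_mono C (posDef_real_smul_one hq).posSemidef.nonneg
        (posDef_real_smul_one hr) hqP hrS

end UpdatedCovariance

/-- Uniform lower bound on the minimized filtering error covariance: if
`q·I ⪯ P`, `r·I ⪯ S`, `C Cᵀ ⪯ c·I` with `P`, `S` symmetric positive definite,
then `Ξᵤ = P − P Cᵀ (C P Cᵀ + S)⁻¹ C P ⪰ ε·I` with `ε = (1/q + c/r)⁻¹`. -/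
theorem filtering_error_covariance_lower_bound {n p : ℕ}
    (q r c : ℝ) (hq : 0 < q) (hr : 0 < r) (hc : 0 < c)
    (P : Matrix (Fin n) (Fin n) ℝ) (S : Matrix (Fin p) (Fin p) ℝ)
    (C : Matrix (Fin p) (Fin n) ℝ)
    (hP : P.PosDef) (hS : S.PosDef)
    (hqP : (P - q • (1 : Matrix (Fin n) (Fin n) ℝ)).PosSemidef)
    (hrS : (S - r • (1 : Matrix (Fin p) (Fin p) ℝ)).PosSemidef)
    (hC : (c • (1 : Matrix (Fin p) (Fin p) ℝ) - C * Cᵀ).PosSemidef)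
    (Ξᵤ : Matrix (Fin n) (Fin n) ℝ)
    (hΞᵤ : Ξᵤ = P - P * Cᵀ * (C * P * Cᵀ + S)⁻¹ * C * P)
    (ε : ℝ) (hε : ε = (1 / q + c / r)⁻¹) :
    (Ξᵤ - ε • (1 : Matrix (Fin n) (Fin n) ℝ)).PosSemidef := by
  subst hΞᵤ hε
  rw [← conjTranspose_eq_transpose_of_trivial] at hC ⊢
  exact filtering_error_covariance_lower_bound_general hq hr hc hqP hrS hC
end

section
/- Let P be a symmetric positive definite n×n real matrix, R a symmetric positive definite p×p real matrix, D a symmetric positive semidefinite p×p real matrix, and C a p×n real matrix. For ρ ∈ (0,1] define R̄(ρ) = ρ²·(C P Cᵀ + R) + ρ(1−ρ)·D and f(ρ) = tr(P) − ρ²·tr( P Cᵀ R̄(ρ)⁻¹ C P ). Then f is non-increasing on (0,1]: for all 0 < ρ₁ ≤ ρ₂ ≤ 1, f(ρ₂) ≤ f(ρ₁). -/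
open Matrix Set

/-!
Since `R̄(ρ) = ρ² (S + (ρ⁻¹ - 1) D)` with `S = C P Cᵀ + R`, the factor `ρ²` cancels against the
inverse: `ρ² R̄(ρ)⁻¹ = (S + (ρ⁻¹ - 1) D)⁻¹`. The weight `ρ⁻¹ - 1` of `D ≥ 0` decreases to `0` on
`(0, 1]` and inversion reverses the Loewner order, so the whole filtering error covariance, and not
only its trace, is antitone in `ρ`.
-/

section MatrixInverse

variable {n K : Type*} [Fintype n] [DecidableEq n]

-- Both Schur complements of `fromBlocks B 1 1 A⁻¹` are read off: `A⁻¹ - B⁻¹` and `B - A`.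
theorem posSemidef_inv_sub_inv [Field K] [PartialOrder K] [StarRing K] [StarOrderedRing K]
    {A B : Matrix n n K} (hA : A.PosDef) (hAB : (B - A).PosSemidef) :
    (A⁻¹ - B⁻¹).PosSemidef := by
  have hB : B.PosDef := by simpa using hA.add_posSemidef hAB
  let _ := hB.isUnit.invertible
  let _ := hA.inv.isUnit.invertible
  have hAA : A⁻¹⁻¹ = A :=
    nonsing_inv_nonsing_inv A ((isUnit_iff_isUnit_det A).mp hA.isUnit)
  have hSchur : (A⁻¹ - 1ᴴ * B⁻¹ * 1).PosSemidef ↔ (B - 1 * A⁻¹⁻¹ * 1ᴴ).PosSemidef :=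
    (hB.fromBlocks₁₁ 1 A⁻¹).symm.trans (hA.inv.fromBlocks₂₂ B 1)
  simpa [hAA, hAB] using hSchur

theorem inv_smul_of_ne_zero {F : Type*} [Field F] [CommRing K] [Algebra F K] {c : F}
    (hc : c ≠ 0) (A : Matrix n n K) : (c • A)⁻¹ = c⁻¹ • A⁻¹ := by
  have h_one : (c • (1 : Matrix n n K))⁻¹ = c⁻¹ • 1 :=
    inv_eq_right_inv (by simp [smul_smul, hc])
  calc (c • A)⁻¹ = (A * c • 1)⁻¹ := by simp
    _ = c⁻¹ • A⁻¹ := by rw [Matrix.mul_inv_rev, h_one, Matrix.smul_mul, Matrix.one_mul]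

end MatrixInverse

open scoped ComplexOrder MatrixOrder

section LoewnerOrder

variable {m n 𝕜 : Type*} [RCLike 𝕜] [Fintype n]

theorem conjTranspose_mul_mul_mono [Finite m] {A B : Matrix n n 𝕜} (hAB : A ≤ B)
    (C : Matrix n m 𝕜) : Cᴴ * A * C ≤ Cᴴ * B * C := by
  have h : (Cᴴ * (B - A) * C).PosSemidef := PosSemidef.conjTranspose_mul_mul_same hAB C
  rwa [Matrix.mul_sub, Matrix.sub_mul] at h

theorem antitoneOn_inv_posDef [DecidableEq n] :
    AntitoneOn (fun A : Matrix n n 𝕜 ↦ A⁻¹) {A | A.PosDef} :=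
  fun _ hA _ _ hAB ↦ posSemidef_inv_sub_inv hA hAB

theorem antitoneOn_inv_add_smul [DecidableEq n] {S D : Matrix n n 𝕜} (hS : S.PosDef)
    (hD : D.PosSemidef) : AntitoneOn (fun t : ℝ ↦ (S + t • D)⁻¹) (Ici 0) := by
  have h_mono : Monotone fun t : ℝ ↦ S + t • D := fun s t hst ↦ by
    rw [le_iff, add_sub_add_left_eq_sub, ← sub_smul]
    exact hD.smul (sub_nonneg.mpr hst)
  exact antitoneOn_inv_posDef.comp_MonotoneOn (h_mono.monotoneOn _)
    fun t ht ↦ hS.add_posSemidef (hD.smul ht)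

end LoewnerOrder

section FilteringErrorCov

variable {m n 𝕜 : Type*} [RCLike 𝕜]

/-- The innovation covariance `R̄(ρ)` at activation probability `ρ`, where `S` stands for the
innovation covariance `C P Cᵀ + R` of permanent transmission (`ρ = 1`) and `ρ (1 - ρ)` is the
variance of the transmission indicator. -/
def innovationCov (S D : Matrix m m 𝕜) (ρ : ℝ) : Matrix m m 𝕜 :=
  ρ ^ 2 • S + (ρ * (1 - ρ)) • D

theorem innovationCov_eq_sq_smul (S D : Matrix m m 𝕜) {ρ : ℝ} (hρ : ρ ≠ 0) :
    innovationCov S D ρ = ρ ^ 2 • (S + (ρ⁻¹ - 1) • D) := by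
  rw [innovationCov, smul_add, smul_smul]
  congr 2
  field_simp

variable [Fintype m] [DecidableEq m]

theorem sq_smul_inv_innovationCov (S D : Matrix m m 𝕜) {ρ : ℝ} (hρ : ρ ≠ 0) :
    ρ ^ 2 • (innovationCov S D ρ)⁻¹ = (S + (ρ⁻¹ - 1) • D)⁻¹ := by
  have hρ2 : ρ ^ 2 ≠ 0 := pow_ne_zero 2 hρ
  rw [innovationCov_eq_sq_smul S D hρ, inv_smul_of_ne_zero hρ2, smul_inv_smul₀ hρ2]

theorem monotoneOn_sq_smul_inv_innovationCov {S D : Matrix m m 𝕜} (hS : S.PosDef)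
    (hD : D.PosSemidef) :
    MonotoneOn (fun ρ : ℝ ↦ ρ ^ 2 • (innovationCov S D ρ)⁻¹) (Ioc 0 1) := by
  have h_weight : AntitoneOn (fun ρ : ℝ ↦ ρ⁻¹ - 1) (Ioc 0 1) :=
    fun ρ₁ h₁ ρ₂ _ h ↦ sub_le_sub_right (inv_anti₀ h₁.1 h) 1
  have h_nonneg : MapsTo (fun ρ : ℝ ↦ ρ⁻¹ - 1) (Ioc 0 1) (Ici 0) :=
    fun ρ hρ ↦ sub_nonneg.mpr (one_le_inv_iff₀.mpr hρ)
  refine ((antitoneOn_inv_add_smul hS hD).comp h_weight h_nonneg).congr fun ρ hρ ↦ ?_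
  exact (sq_smul_inv_innovationCov S D hρ.1.ne').symm

variable [Fintype n]

/-- The minimized filtering error covariance at activation probability `ρ`, for prediction
covariance `P`, noise covariance `R`, variance term `D` and measurement matrix `C`. Its trace is the
performance index `f(ρ)`. -/
noncomputable def filteringErrorCov (P : Matrix n n 𝕜) (R D : Matrix m m 𝕜) (C : Matrix m n 𝕜)
    (ρ : ℝ) : Matrix n n 𝕜 :=
  P - ρ ^ 2 • (P * Cᴴ * (innovationCov (C * P * Cᴴ + R) D ρ)⁻¹ * C * P)

theorem performance_index_nonincreasing_general {P : Matrix n n 𝕜} {R D : Matrix m m 𝕜}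
    {C : Matrix m n 𝕜} (hP : P.IsHermitian) (hS : (C * P * Cᴴ + R).PosDef) (hD : D.PosSemidef) :
    AntitoneOn (filteringErrorCov P R D C) (Ioc 0 1) := by
  have h_gain (ρ : ℝ) : filteringErrorCov P R D C ρ =
      P - (C * P)ᴴ * (ρ ^ 2 • (innovationCov (C * P * Cᴴ + R) D ρ)⁻¹) * (C * P) := by
    simp only [filteringErrorCov, conjTranspose_mul, hP.eq, Matrix.mul_smul, Matrix.smul_mul,
      Matrix.mul_assoc]
  intro ρ₁ h₁ ρ₂ h₂ h
  rw [h_gain, h_gain]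
  exact sub_le_sub_left
    (conjTranspose_mul_mul_mono (monotoneOn_sq_smul_inv_innovationCov hS hD h₁ h₂ h) (C * P)) P

end FilteringErrorCov

/-- Monotonicity of the estimation performance index in the activation
probability: with `R̄(ρ) = ρ²(C P Cᵀ + R) + ρ(1−ρ)D` and
`f(ρ) = tr(P) − ρ² tr(P Cᵀ R̄(ρ)⁻¹ C P)`, the function `f` is non-increasing on
`(0,1]`. -/
theorem performance_index_nonincreasing {n p : ℕ}
    (P : Matrix (Fin n) (Fin n) ℝ) (R : Matrix (Fin p) (Fin p) ℝ)
    (D : Matrix (Fin p) (Fin p) ℝ) (C : Matrix (Fin p) (Fin n) ℝ)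
    (hP : P.PosDef) (hR : R.PosDef) (hD : D.PosSemidef)
    (Rb : ℝ → Matrix (Fin p) (Fin p) ℝ)
    (hRb : ∀ ρ : ℝ, Rb ρ = ρ ^ 2 • (C * P * Cᵀ + R) + (ρ * (1 - ρ)) • D)
    (f : ℝ → ℝ)
    (hf : ∀ ρ : ℝ, f ρ = P.trace - ρ ^ 2 * (P * Cᵀ * (Rb ρ)⁻¹ * C * P).trace) :
    ∀ ρ₁ ρ₂ : ℝ, 0 < ρ₁ → ρ₁ ≤ ρ₂ → ρ₂ ≤ 1 → f ρ₂ ≤ f ρ₁ := by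
  intro ρ₁ ρ₂ h₁ h h₂
  have hS : (C * P * Cᴴ + R).PosDef :=
    hR.posSemidef_add (hP.posSemidef.mul_mul_conjTranspose_same C)
  have hf_trace (ρ : ℝ) :
      f ρ = tracePositiveLinearMap (Fin n) ℝ ℝ (filteringErrorCov P R D C ρ) := by
    simp [hf, hRb, filteringErrorCov, innovationCov]
  rw [hf_trace, hf_trace]
  exact OrderHomClass.mono _ <| performance_index_nonincreasing_general hP.isHermitian hS hD
    ⟨h₁, h.trans h₂⟩ ⟨h₁.trans_le h, h₂⟩ h
end
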